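/- Suppose r_i β_i⁺ e^{d_i⁺ r_i} < e for each i = 1,…,m, and let r = max(r₁,…,r_m). Then: (1) for every t ∈ ℝ and φ, ψ ∈ X with φ ≤_B ψ and φ_i(s) < ψ_i(s) for all i and s, one has f_i(t,ψ) − f_i(t,φ) > −μ_i(ψ_i(0) − φ_i(0)) for each i; (2) if φ ∈ X₊, then 0 ≤_B y_t(φ) for every t ≥ r; and (3) if φ ∈ X₊ with φ(0) ≫ 0 (all components φ_i(0) > 0), then y_t(φ) ≫_B 0 for every t ≥ 2r. -/

import Mathlib

open MeasureTheory Filter Topology Set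

noncomputable section

namespace Nicholson

/-- An almost periodic function: continuous, with a relatively dense set of
`ε`-periods for every `ε > 0`. -/
def AlmostPeriodic (f : ℝ → ℝ) : Prop :=
  Continuous f ∧ ∀ ε > 0, ∃ L > 0, ∀ a : ℝ, ∃ s ∈ Set.Icc a (a + L),
    ∀ t, |f (t + s) - f t| < ε

/-- The phase space `X = C([-r₁,0]) × ⋯ × C([-r_m,0])` (as plain functions;
continuity is carried by the solutions). -/
abbrev XN (m : ℕ) (r : Fin m → ℝ) := ∀ i : Fin m, Set.Icc (-(r i)) (0:ℝ) → ℝ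

/-- The cone `X₊` of componentwise nonnegative functions. -/
def XPos {m : ℕ} {r : Fin m → ℝ} (φ : XN m r) : Prop := ∀ i s, 0 ≤ φ i s

/-- The point `0 ∈ [-rᵢ,0]`. -/
def pt0N {m : ℕ} (r : Fin m → ℝ) (hr : ∀ i, 0 < r i) (i : Fin m) :
    Set.Icc (-(r i)) (0:ℝ) :=
  ⟨0, Set.mem_Icc.mpr ⟨by linarith [hr i], le_rfl⟩⟩

/-- The point `-rᵢ ∈ [-rᵢ,0]`. -/
def ptnegN {m : ℕ} (r : Fin m → ℝ) (hr : ∀ i, 0 < r i) (i : Fin m) :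
    Set.Icc (-(r i)) (0:ℝ)  :=
  ⟨-(r i), Set.mem_Icc.mpr ⟨le_rfl, by linarith [hr i]⟩⟩

/-- Conditions (a1)-(a6) on the coefficients of the Nicholson system. -/
def NicholsonHyps (m : ℕ) (d : Fin m → ℝ → ℝ) (a : Fin m → Fin m → ℝ → ℝ)
    (β c : Fin m → ℝ → ℝ) : Prop :=
  (∀ i, AlmostPeriodic (d i)) ∧ (∀ i j, AlmostPeriodic (a i j)) ∧
  (∀ i, AlmostPeriodic (β i)) ∧ (∀ i, AlmostPeriodic (c i)) ∧
  (∃ d₀ > 0, ∀ i t, d₀ ≤ d i t) ∧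
  (∀ i j t, 0 ≤ a i j t) ∧ (∀ i t, a i i t = 0) ∧
  (∀ i t, 0 < β i t) ∧
  (∃ c₀ > 0, ∀ i t, c₀ ≤ c i t) ∧
  (∀ i t, 0 < d i t - ∑ j, a j i t)

/-- The right-hand side of the `i`-th Nicholson equation along a function `y`. -/
def rhs {m : ℕ} (d : Fin m → ℝ → ℝ) (a : Fin m → Fin m → ℝ → ℝ) (β c : Fin m → ℝ → ℝ)
    (r : Fin m → ℝ) (i : Fin m) (t : ℝ) (y : ℝ → Fin m → ℝ) : ℝ :=
  -(d i t) * y t i + (∑ j, a i j t * y t j) +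
    β i t * y (t - r i) i * Real.exp (-(c i t * y (t - r i) i))

/-- `y` is the solution of the Nicholson system with initial value `φ ∈ X`. -/
def SolN {m : ℕ} (d : Fin m → ℝ → ℝ) (a : Fin m → Fin m → ℝ → ℝ) (β c : Fin m → ℝ → ℝ)
    (r : Fin m → ℝ) (φ : XN m r) (y : ℝ → Fin m → ℝ) : Prop :=
  (∀ i, ContinuousOn (fun t => y t i) (Set.Ici (-(r i)))) ∧
  (∀ i (s : Set.Icc (-(r i)) (0:ℝ)), y (s : ℝ) i = φ i s) ∧
  ∀ i t, 0 ≤ t → HasDerivWithinAt (fun u => y u i) (rhs d a β c r i t y) (Set.Ici t) t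

/-- `b` is an entire (globally defined) solution of the Nicholson system. -/
def EntireSolN {m : ℕ} (d : Fin m → ℝ → ℝ) (a : Fin m → Fin m → ℝ → ℝ)
    (β c : Fin m → ℝ → ℝ) (r : Fin m → ℝ) (b : ℝ → Fin m → ℝ) : Prop :=
  ∀ i t, HasDerivAt (fun u => b u i) (rhs d a β c r i t b) t

/-- The segment `y_t ∈ X` of `y`. -/
def segN {m : ℕ} (r : Fin m → ℝ) (y : ℝ → Fin m → ℝ) (t : ℝ) : XN m r :=
  fun i s => y (t + (s : ℝ)) i

/-- The exponential order `φ ≤_B ψ` for `B = diag(-μ₁,…,-μ_m)`. -/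
def expLeN {m : ℕ} (μ : Fin m → ℝ) {r : Fin m → ℝ} (φ ψ : XN m r) : Prop :=
  (∀ i s, φ i s ≤ ψ i s) ∧
  ∀ i, ∀ s t : Set.Icc (-(r i)) (0:ℝ), (s : ℝ) ≤ (t : ℝ) →
    (ψ i s - φ i s) * Real.exp (μ i * (s : ℝ)) ≤ (ψ i t - φ i t) * Real.exp (μ i * (t : ℝ))

/-- The zero element of `X`. -/
def zeroN (m : ℕ) (r : Fin m → ℝ) : XN m r := fun _ _ => 0

/-- Extension of the `i`-th component of `φ` to `ℝ` by the projection onto `[-rᵢ,0]`. -/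
def extN {m : ℕ} {r : Fin m → ℝ} (hr : ∀ i, 0 < r i) (φ : XN m r) (i : Fin m) : ℝ → ℝ :=
  fun s => φ i (Set.projIcc (-(r i)) 0 (by linarith [hr i]) s)

/-- `φ ≫_B 0`: `φ` is Lipschitz, `φᵢ(-rᵢ) > 0` and
`ess inf (φᵢ' + μᵢ φᵢ) > 0` on `[-rᵢ,0]` for each `i`. -/
def strPosN {m : ℕ} {r : Fin m → ℝ} (hr : ∀ i, 0 < r i) (μ : Fin m → ℝ)
    (φ : XN m r) : Prop :=
  (∀ i, ∃ K, LipschitzWith K (φ i)) ∧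
  (∀ i, 0 < φ i (ptnegN r hr i)) ∧
  ∀ i, ∃ ε > 0, ∀ᵐ s ∂(volume.restrict (Set.Ioo (-(r i)) (0:ℝ))),
    DifferentiableAt ℝ (extN hr φ i) s ∧
    ε ≤ deriv (extN hr φ i) s + μ i * extN hr φ i s

/-- The Nicholson nonlinearity `fᵢ(t,φ)`. -/
def fN {m : ℕ} (d : Fin m → ℝ → ℝ) (a : Fin m → Fin m → ℝ → ℝ) (β c : Fin m → ℝ → ℝ)
    (r : Fin m → ℝ) (hr : ∀ i, 0 < r i) (i : Fin m) (t : ℝ) (φ : XN m r) : ℝ :=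
  -(d i t) * φ i (pt0N r hr i) + (∑ j, a i j t * φ j (pt0N r hr j)) +
    β i t * φ i (ptnegN r hr i) * Real.exp (-(c i t * φ i (ptnegN r hr i)))

/-- The supremum over `ℝ` of a real function. -/
def supR (f : ℝ → ℝ) : ℝ := sSup (Set.range f)

/-- The exponents `μᵢ = (1/rᵢ) ln(e²/(rᵢ βᵢ⁺))`. -/
def muN {m : ℕ} (r : Fin m → ℝ) (β : Fin m → ℝ → ℝ) (i : Fin m) : ℝ :=
  (1 / r i) * Real.log (Real.exp 2 / (r i * supR (β i)))

end Nicholson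

namespace Nicholson

/-!
The slope of `x ↦ x e^{-cx}` is at least `-e⁻²`, whatever `c` is, so the delayed term of the
difference of two right-hand sides costs at most `βᵢ⁺ e⁻²` times the gap at `-rᵢ`. The exponential
order bounds that gap by `e^{μᵢ rᵢ}` times the gap at `0`, and `μᵢ` is chosen so that
`βᵢ⁺ e⁻² e^{μᵢ rᵢ} = 1 / rᵢ`. Quasimonotonicity therefore reduces to `1 / rᵢ + dᵢ⁺ < μᵢ`, which is
a rewriting of `rᵢ βᵢ⁺ e^{dᵢ⁺ rᵢ} < e`.

A solution starting in the cone stays nonnegative, by the method of steps and a first-exit argument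
for cooperative linear differential inequalities. Hence `yᵢ' ≥ -dᵢ⁺ yᵢ`, so `t ↦ yᵢ(t) e^{kt}` is
monotone on `[0, ∞)` for every `k ≥ dᵢ⁺`. With `k = μᵢ` this is membership in the cone of the
exponential order, with `k = dᵢ⁺` it gives strict positivity, and then
`yᵢ' + μᵢ yᵢ ≥ (μᵢ - dᵢ⁺) yᵢ` is bounded away from zero on compact intervals.
-/

lemma exists_forall_lt_of_continuousOn {X ι : Type*} [TopologicalSpace X] [Finite ι] {s : Set X}
    (hs : IsCompact s) {g : X → ι → ℝ} (hg : ∀ i, ContinuousOn (fun x => g x i) s) :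
    ∃ K, ∀ i, ∀ x ∈ s, g x i < K := by
  cases nonempty_fintype ι
  obtain ⟨C, hC⟩ := hs.exists_bound_of_continuousOn (continuousOn_pi.2 hg)
  refine ⟨C + 1, fun i x hx => ?_⟩
  calc g x i ≤ ‖g x i‖ := Real.le_norm_self _
    _ ≤ ‖g x‖ := norm_le_pi_norm _ i
    _ < C + 1 := (hC x hx).trans_lt (lt_add_one C)

section DifferentialInequalities

lemma eventually_nonneg_of_deriv_right_pos {f : ℝ → ℝ} {f' x : ℝ}
    (hf : HasDerivWithinAt f f' (Ici x) x) (hx : 0 ≤ f x) (hpos : f x = 0 → 0 < f') :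
    ∀ᶠ t in 𝓝[>] x, 0 ≤ f t := by
  rcases hx.lt_or_eq with hlt | hzero
  · have hcont : Tendsto f (𝓝[>] x) (𝓝 (f x)) :=
      hf.continuousWithinAt.mono_left (nhdsWithin_mono _ Ioi_subset_Ici_self)
    exact (hcont.eventually_const_lt hlt).mono fun _ h => h.le
  · have hslope := (hasDerivWithinAt_iff_tendsto_slope' self_notMem_Ioi).1
      (hf.mono Ioi_subset_Ici_self)
    filter_upwards [hslope.eventually_const_lt (hpos hzero.symm), self_mem_nhdsWithin]
      with t ht hxt
    rw [slope_def_field, ← hzero, sub_zero] at ht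
    exact ((div_pos_iff_of_pos_right (sub_pos.2 hxt)).1 ht).le

lemma nonneg_of_deriv_right_pos_of_eq_zero {ι : Type*} [Finite ι] {z z' : ℝ → ι → ℝ} {a b : ℝ}
    (hcont : ∀ i, ContinuousOn (fun t => z t i) (Icc a b)) (ha : 0 ≤ z a)
    (hderiv : ∀ i, ∀ t ∈ Ico a b, HasDerivWithinAt (fun u => z u i) (z' t i) (Ici t) t)
    (hpos : ∀ i, ∀ t ∈ Ico a b, 0 ≤ z t → z t i = 0 → 0 < z' t i) :
    ∀ t ∈ Icc a b, 0 ≤ z t := by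
  have hclosed : IsClosed (z ⁻¹' Ici 0 ∩ Icc a b) := by
    rw [inter_comm]
    exact (continuousOn_pi.2 hcont).preimage_isClosed_of_isClosed isClosed_Icc isClosed_Ici
  refine hclosed.Icc_subset_of_forall_mem_nhdsWithin ha fun t ⟨hzt, ht⟩ => ?_
  exact eventually_all.2 fun i =>
    eventually_nonneg_of_deriv_right_pos (hderiv i t ht) (hzt i) (hpos i t ht hzt)

section Cooperative

variable {ι : Type*} [Fintype ι] {y y' d : ℝ → ι → ℝ} {a : ℝ → ι → ι → ℝ} {T T' : ℝ}

-- With `K` above the row sums, the perturbation `ε e^{Kt}` makes the derivative of a component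
-- strictly positive where that component vanishes.
lemma nonneg_add_mul_exp_of_cooperative_deriv_right {K ε : ℝ} (hε : 0 < ε)
    (hcont : ∀ i, ContinuousOn (fun t => y t i) (Icc T T')) (hT : 0 ≤ y T)
    (ha : ∀ i j, ∀ t ∈ Ico T T', 0 ≤ a t i j)
    (hK : ∀ i, ∀ t ∈ Ico T T', ∑ j, a t i j - d t i < K)
    (hderiv : ∀ i, ∀ t ∈ Ico T T', HasDerivWithinAt (fun u => y u i) (y' t i) (Ici t) t)
    (hy' : ∀ i, ∀ t ∈ Ico T T', -d t i * y t i + ∑ j, a t i j * y t j ≤ y' t i) :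
    ∀ t ∈ Icc T T', ∀ i, 0 ≤ y t i + ε * Real.exp (K * t) := by
  refine nonneg_of_deriv_right_pos_of_eq_zero (z := fun t i => y t i + ε * Real.exp (K * t))
    (z' := fun t i => y' t i + K * (ε * Real.exp (K * t)))
    (fun i => (hcont i).add (by fun_prop)) (fun i => ?_) (fun i t ht => ?_)
    fun i t ht hz hzi => ?_
  · exact add_nonneg (hT i) (by positivity)
  · have hexp := (((hasDerivAt_id' t).const_mul K).exp.const_mul ε).hasDerivWithinAt (s := Ici t)
    exact ((hderiv i t ht).add hexp).congr_deriv (by ring)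
  · set δ := ε * Real.exp (K * t)
    have hδ : 0 < δ := by positivity
    have hyi : y t i = -δ := by linarith
    have hsum : -((∑ j, a t i j) * δ) ≤ ∑ j, a t i j * y t j := by
      rw [Finset.sum_mul, ← Finset.sum_neg_distrib]
      refine Finset.sum_le_sum fun j _ => ?_
      rw [← mul_neg]
      exact mul_le_mul_of_nonneg_left (neg_le_iff_add_nonneg.2 (hz j)) (ha i j t ht)
    calc 0 < (K - (∑ j, a t i j - d t i)) * δ := mul_pos (sub_pos.2 (hK i t ht)) hδ
      _ = -d t i * y t i + -((∑ j, a t i j) * δ) + K * δ := by rw [hyi]; ring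
      _ ≤ -d t i * y t i + ∑ j, a t i j * y t j + K * δ := by gcongr
      _ ≤ y' t i + K * δ := by gcongr; exact hy' i t ht

lemma nonneg_of_cooperative_deriv_right
    (hcont : ∀ i, ContinuousOn (fun t => y t i) (Icc T T')) (hT : 0 ≤ y T)
    (hd : ∀ i, ContinuousOn (fun t => d t i) (Icc T T'))
    (ha_cont : ∀ i j, ContinuousOn (fun t => a t i j) (Icc T T'))
    (ha : ∀ i j, ∀ t ∈ Ico T T', 0 ≤ a t i j)
    (hderiv : ∀ i, ∀ t ∈ Ico T T', HasDerivWithinAt (fun u => y u i) (y' t i) (Ici t) t)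
    (hy' : ∀ i, ∀ t ∈ Ico T T', -d t i * y t i + ∑ j, a t i j * y t j ≤ y' t i) :
    ∀ t ∈ Icc T T', 0 ≤ y t := by
  obtain ⟨K, hK⟩ := exists_forall_lt_of_continuousOn (isCompact_Icc (a := T) (b := T'))
    (g := fun t i => ∑ j, a t i j - d t i)
    fun i => (continuousOn_finsetSum _ fun j _ => ha_cont i j).sub (hd i)
  intro t ht i
  refine le_of_forall_pos_le_add fun ε hε => ?_
  have hperturbed := nonneg_add_mul_exp_of_cooperative_deriv_right
    (ε := ε / Real.exp (K * t)) (by positivity) hcont hT ha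
    (fun i t ht => hK i t (Ico_subset_Icc_self ht)) hderiv hy' t ht i
  rwa [div_mul_cancel₀ _ (Real.exp_pos _).ne'] at hperturbed

end Cooperative

variable {f f' : ℝ → ℝ} {a : ℝ}

lemma monotoneOn_mul_exp_of_deriv_right {k : ℝ} (hf : ContinuousOn f (Ici a))
    (hderiv : ∀ t ∈ Ici a, HasDerivWithinAt f (f' t) (Ici t) t)
    (hf' : ∀ t ∈ Ici a, -k * f t ≤ f' t) :
    MonotoneOn (fun t => f t * Real.exp (k * t)) (Ici a) := by
  intro s hs t _ hst
  have hIcc : Icc s t ⊆ Ici a := fun _ hx => hs.trans hx.1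
  have hIco : Ico s t ⊆ Ici a := Ico_subset_Icc_self.trans hIcc
  have hderiv_exp : ∀ x ∈ Ico s t, HasDerivWithinAt (fun t => f t * Real.exp (k * t))
      (f' x * Real.exp (k * x) + f x * (Real.exp (k * x) * (k * 1))) (Ici x) x := fun x hx =>
    (hderiv x (hIco hx)).mul ((hasDerivAt_id' x).const_mul k).exp.hasDerivWithinAt
  refine image_le_of_deriv_right_le_deriv_boundary (f := fun _ => f s * Real.exp (k * s))
    (f' := fun _ => 0) (B := fun x => f x * Real.exp (k * x)) continuousOn_const
    (fun _ _ => hasDerivWithinAt_const _ _ _) le_rfl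
    ((hf.mono hIcc).mul (by fun_prop)) hderiv_exp (fun x hx => ?_) (right_mem_Icc.2 hst)
  calc 0 ≤ (f' x + k * f x) * Real.exp (k * x) :=
        mul_nonneg (by linarith [hf' x (hIco hx)]) (Real.exp_pos _).le
    _ = _ := by ring

lemma hasDerivWithinAt_Ici_of_continuousOn_deriv_right (hf : ContinuousOn f (Ici a))
    (hderiv : ∀ t ∈ Ici a, HasDerivWithinAt f (f' t) (Ici t) t) (hf' : ContinuousOn f' (Ici a)) :
    ∀ t ∈ Ici a, HasDerivWithinAt f (f' t) (Ici a) t := by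
  intro t (hat : a ≤ t)
  rcases hat.eq_or_lt with rfl | hat'
  · exact hderiv a self_mem_Ici
  have huIcc : ∀ s ∈ Ici a, uIcc a s ⊆ Ici a := fun s hs => by
    rw [uIcc_of_le hs]; exact Icc_subset_Ici_self
  have hint : ∀ s ∈ Ici a, IntervalIntegrable f' volume a s := fun s hs =>
    (hf'.mono (huIcc s hs)).intervalIntegrable
  have hftc : ∀ s ∈ Ici a, f s = f a + ∫ u in a..s, f' u := fun s hs => by
    rw [intervalIntegral.integral_eq_sub_of_hasDeriv_right (hf.mono (huIcc s hs))
      (fun x hx => (hderiv x (huIcc s hs (Ioo_subset_Icc_self hx))).mono Ioi_subset_Ici_self)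
      (hint s hs)]
    ring
  have hnhds : Ici a ∈ 𝓝 t := Ici_mem_nhds hat'
  have hderiv_integral : HasDerivAt (fun s => ∫ u in a..s, f' u) (f' t) t :=
    intervalIntegral.integral_hasDerivAt_right (hint t hat)
      ⟨Ici a, hnhds, hf'.aestronglyMeasurable measurableSet_Ici⟩ (hf'.continuousAt hnhds)
  exact (hderiv_integral.const_add (f a)).hasDerivWithinAt.congr hftc (hftc t hat)

end DifferentialInequalities

section Ricker

lemma neg_exp_neg_two_le_one_sub_mul_exp_neg (u : ℝ) :
    -Real.exp (-2) ≤ (1 - u) * Real.exp (-u) := by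
  have hsplit : Real.exp (-2) = Real.exp (u - 2) * Real.exp (-u) := by
    rw [← Real.exp_add]; ring_nf
  rw [hsplit, ← neg_mul]
  exact mul_le_mul_of_nonneg_right (by linarith [Real.add_one_le_exp (u - 2)]) (Real.exp_pos _).le

lemma monotone_mul_exp_neg_add (c : ℝ) :
    Monotone fun x : ℝ => x * Real.exp (-(c * x)) + Real.exp (-2) * x := by
  have hderiv : ∀ x, HasDerivAt (fun x => x * Real.exp (-(c * x)) + Real.exp (-2) * x)
      ((1 - c * x) * Real.exp (-(c * x)) + Real.exp (-2)) x := fun x =>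
    (((hasDerivAt_id' x).mul ((hasDerivAt_id' x).const_mul c).fun_neg.exp).add
      ((hasDerivAt_id' x).const_mul _)).congr_deriv (by ring)
  refine monotone_of_deriv_nonneg (fun x => (hderiv x).differentiableAt) fun x => ?_
  rw [(hderiv x).deriv]
  linarith [neg_exp_neg_two_le_one_sub_mul_exp_neg (c * x)]

lemma neg_mul_sub_le_mul_mul_exp_neg_sub {b B c x y : ℝ} (hb : 0 ≤ b) (hbB : b ≤ B)
    (hxy : x ≤ y) :
    -(B * Real.exp (-2) * (y - x)) ≤
      b * y * Real.exp (-(c * y)) - b * x * Real.exp (-(c * x)) := by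
  have hmono : x * Real.exp (-(c * x)) + Real.exp (-2) * x ≤
    y * Real.exp (-(c * y)) + Real.exp (-2) * y := monotone_mul_exp_neg_add c hxy
  calc -(B * Real.exp (-2) * (y - x)) ≤ -(b * Real.exp (-2) * (y - x)) := by
        have := sub_nonneg.2 hxy
        gcongr
    _ = b * -(Real.exp (-2) * (y - x)) := by ring
    _ ≤ b * (y * Real.exp (-(c * y)) - x * Real.exp (-(c * x))) :=
        mul_le_mul_of_nonneg_left (by linarith) hb
    _ = _ := by ring

end Ricker

lemma AlmostPeriodic.bddAbove_range {f : ℝ → ℝ} (hf : AlmostPeriodic f) :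
    BddAbove (range f) := by
  obtain ⟨L, -, hL⟩ := hf.2 1 one_pos
  obtain ⟨M, hM⟩ := (isCompact_Icc (a := (0 : ℝ)) (b := L)).bddAbove_image hf.1.continuousOn
  refine ⟨M + 1, ?_⟩
  rintro _ ⟨t, rfl⟩
  obtain ⟨s, hs, hclose⟩ := hL (-t)
  have hshift : f (t + s) ≤ M := hM ⟨t + s, ⟨by linarith [hs.1], by linarith [hs.2]⟩, rfl⟩
  linarith [(abs_lt.1 (hclose t)).1]

lemma le_supR {f : ℝ → ℝ} (hf : BddAbove (range f)) (t : ℝ) : f t ≤ supR f :=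
  le_csSup hf ⟨t, rfl⟩

/-- Coefficients of a cooperative Nicholson system that need not be almost periodic. Bounding `d`
and `β` above makes the suprema `dᵢ⁺` and `βᵢ⁺` meaningful, and `0 < βᵢ⁺` does so for the logarithm
in `μᵢ`. -/
structure CooperativeCoeffs {m : ℕ} (d : Fin m → ℝ → ℝ) (a : Fin m → Fin m → ℝ → ℝ)
    (β c : Fin m → ℝ → ℝ) : Prop where
  continuous_d : ∀ i, Continuous (d i)
  continuous_a : ∀ i j, Continuous (a i j)
  continuous_β : ∀ i, Continuous (β i)
  continuous_c : ∀ i, Continuous (c i)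
  bddAbove_d : ∀ i, BddAbove (range (d i))
  bddAbove_β : ∀ i, BddAbove (range (β i))
  a_nonneg : ∀ i j t, 0 ≤ a i j t
  β_nonneg : ∀ i t, 0 ≤ β i t
  supR_β_pos : ∀ i, 0 < supR (β i)

section System

variable {m : ℕ} {d : Fin m → ℝ → ℝ} {a : Fin m → Fin m → ℝ → ℝ} {β c : Fin m → ℝ → ℝ}
  {r : Fin m → ℝ} {i : Fin m} {t : ℝ}

lemma NicholsonHyps.cooperativeCoeffs (hN : NicholsonHyps m d a β c) :
    CooperativeCoeffs d a β c := by
  obtain ⟨hd, ha, hβ, hc, -, ha_nonneg, -, hβ_pos, -, -⟩ := hN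
  exact
    { continuous_d := fun i => (hd i).1
      continuous_a := fun i j => (ha i j).1
      continuous_β := fun i => (hβ i).1
      continuous_c := fun i => (hc i).1
      bddAbove_d := fun i => (hd i).bddAbove_range
      bddAbove_β := fun i => (hβ i).bddAbove_range
      a_nonneg := ha_nonneg
      β_nonneg := fun i t => (hβ_pos i t).le
      supR_β_pos := fun i => (hβ_pos i 0).trans_le (le_supR (hβ i).bddAbove_range 0) }

section Quasimonotone

lemma supR_mul_exp_neg_two_mul_exp_muN (hr : 0 < r i) (hβ : 0 < supR (β i)) :
    supR (β i) * Real.exp (-2) * Real.exp (muN r β i * r i) = 1 / r i := by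
  have hlog : muN r β i * r i = Real.log (Real.exp 2 / (r i * supR (β i))) := by
    unfold muN; field_simp
  rw [hlog, Real.exp_log (by positivity), Real.exp_neg]
  field_simp

lemma one_div_add_supR_lt_muN (hr : 0 < r i) (hβ : 0 < supR (β i))
    (hcond : r i * supR (β i) * Real.exp (supR (d i) * r i) < Real.exp 1) :
    1 / r i + supR (d i) < muN r β i := by
  have hlog : 1 + supR (d i) * r i < Real.log (Real.exp 2 / (r i * supR (β i))) := by
    rw [Real.lt_log_iff_exp_lt (by positivity), lt_div_iff₀ (by positivity)]
    calc Real.exp (1 + supR (d i) * r i) * (r i * supR (β i))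
        = Real.exp 1 * (r i * supR (β i) * Real.exp (supR (d i) * r i)) := by
          rw [Real.exp_add]; ring
      _ < Real.exp 1 * Real.exp 1 := by gcongr
      _ = Real.exp 2 := by rw [← Real.exp_add]; norm_num
  calc 1 / r i + supR (d i) = 1 / r i * (1 + supR (d i) * r i) := by field_simp
    _ < muN r β i := mul_lt_mul_of_pos_left hlog (by positivity)

lemma supR_lt_muN (hr : 0 < r i) (hβ : 0 < supR (β i))
    (hcond : r i * supR (β i) * Real.exp (supR (d i) * r i) < Real.exp 1) :
    supR (d i) < muN r β i :=
  (lt_add_of_pos_left _ (one_div_pos.2 hr)).trans (one_div_add_supR_lt_muN hr hβ hcond)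

variable {φ ψ : XN m r}

lemma expLeN.sub_ptnegN_le {μ : Fin m → ℝ} (hle : expLeN μ φ ψ) (hr : ∀ i, 0 < r i) (i : Fin m) :
    ψ i (ptnegN r hr i) - φ i (ptnegN r hr i) ≤
      Real.exp (μ i * r i) * (ψ i (pt0N r hr i) - φ i (pt0N r hr i)) := by
  have hexp := hle.2 i (ptnegN r hr i) (pt0N r hr i) (ptnegN r hr i).2.2
  simp only [ptnegN, pt0N, mul_neg, mul_zero, Real.exp_zero, mul_one, Real.exp_neg] at hexp ⊢
  rwa [← div_eq_mul_inv, div_le_iff₀' (Real.exp_pos _)] at hexp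

lemma CooperativeCoeffs.neg_muN_mul_sub_lt_fN_sub (hC : CooperativeCoeffs d a β c)
    (hr : ∀ i, 0 < r i) (hcond : r i * supR (β i) * Real.exp (supR (d i) * r i) < Real.exp 1)
    (hle : expLeN (muN r β) φ ψ) (hlt : φ i (pt0N r hr i) < ψ i (pt0N r hr i)) (t : ℝ) :
    -(muN r β i) * (ψ i (pt0N r hr i) - φ i (pt0N r hr i)) <
      fN d a β c r hr i t ψ - fN d a β c r hr i t φ := by
  have hsum : ∑ j, a i j t * φ j (pt0N r hr j) ≤ ∑ j, a i j t * ψ j (pt0N r hr j) :=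
    Finset.sum_le_sum fun j _ => mul_le_mul_of_nonneg_left (hle.1 j _) (hC.a_nonneg i j t)
  have hbirth := neg_mul_sub_le_mul_mul_exp_neg_sub (c := c i t) (hC.β_nonneg i t)
    (le_supR (hC.bddAbove_β i) t) (hle.1 i (ptnegN r hr i))
  have hgap := hle.sub_ptnegN_le hr i
  have hβ := hC.supR_β_pos i
  have hd := le_supR (hC.bddAbove_d i) t
  have hμ := one_div_add_supR_lt_muN (hr i) hβ hcond
  simp only [fN]
  set Δ := ψ i (pt0N r hr i) - φ i (pt0N r hr i)
  set Δ' := ψ i (ptnegN r hr i) - φ i (ptnegN r hr i)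
  have hΔ : 0 < Δ := sub_pos.2 hlt
  have hdelayed : supR (β i) * Real.exp (-2) * Δ' ≤ 1 / r i * Δ := by
    calc supR (β i) * Real.exp (-2) * Δ'
        ≤ supR (β i) * Real.exp (-2) * (Real.exp (muN r β i * r i) * Δ) := by gcongr
      _ = 1 / r i * Δ := by rw [← mul_assoc, supR_mul_exp_neg_two_mul_exp_muN (hr i) hβ]
  calc -(muN r β i) * Δ < -(1 / r i + supR (d i)) * Δ :=
        mul_lt_mul_of_pos_right (neg_lt_neg hμ) hΔ
    _ ≤ -(1 / r i + d i t) * Δ :=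
        mul_le_mul_of_nonneg_right (neg_le_neg (add_le_add_right hd _)) hΔ.le
    _ ≤ _ := by linarith

end Quasimonotone

section Solutions

variable {φ : XN m r} {y : ℝ → Fin m → ℝ}

lemma CooperativeCoeffs.linear_part_le_rhs (hC : CooperativeCoeffs d a β c)
    (hdelay : 0 ≤ y (t - r i) i) :
    -(d i t) * y t i + ∑ j, a i j t * y t j ≤ rhs d a β c r i t y :=
  le_add_of_nonneg_right
    (mul_nonneg (mul_nonneg (hC.β_nonneg i t) hdelay) (Real.exp_pos _).le)

lemma CooperativeCoeffs.neg_supR_mul_le_rhs (hC : CooperativeCoeffs d a β c)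
    (hy : 0 ≤ y t) (hdelay : 0 ≤ y (t - r i) i) :
    -supR (d i) * y t i ≤ rhs d a β c r i t y := by
  have hyi : 0 ≤ y t i := hy i
  calc -supR (d i) * y t i ≤ -(d i t) * y t i := by
        gcongr
        exact le_supR (hC.bddAbove_d i) t
    _ ≤ -(d i t) * y t i + ∑ j, a i j t * y t j :=
        le_add_of_nonneg_right
          (Finset.sum_nonneg fun j _ => mul_nonneg (hC.a_nonneg i j t) (hy j))
    _ ≤ rhs d a β c r i t y := hC.linear_part_le_rhs hdelay

lemma SolN.continuousOn_Ici (hy : SolN d a β c r φ y) (hr : 0 < r i) :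
    ContinuousOn (fun t => y t i) (Ici 0) :=
  (hy.1 i).mono (Ici_subset_Ici.2 (by linarith))

lemma SolN.nonneg_step (hy : SolN d a β c r φ y) (hC : CooperativeCoeffs d a β c)
    {ρ T : ℝ} (hr : ∀ i, 0 < r i) (hρ : ∀ i, ρ ≤ r i) (hT : 0 ≤ T)
    (hnonneg : ∀ i t, -r i ≤ t → t ≤ T → 0 ≤ y t i) :
    ∀ i t, -r i ≤ t → t ≤ T + ρ → 0 ≤ y t i := by
  intro i t hit htT
  rcases le_total t T with htT' | hTt
  · exact hnonneg i t hit htT'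
  refine nonneg_of_cooperative_deriv_right (T := T) (T' := T + ρ) (d := fun t i => d i t)
    (a := fun t i j => a i j t) (y' := fun t i => rhs d a β c r i t y)
    (fun i => (hy.continuousOn_Ici (hr i)).mono fun s hs => hT.trans hs.1)
    (fun i => hnonneg i T (by linarith [hr i]) le_rfl)
    (fun i => (hC.continuous_d i).continuousOn) (fun i j => (hC.continuous_a i j).continuousOn)
    (fun i j t _ => hC.a_nonneg i j t) (fun i t ht => hy.2.2 i t (hT.trans ht.1))
    (fun i t ht => hC.linear_part_le_rhs ?_) t ⟨hTt, htT⟩ i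
  exact hnonneg i (t - r i) (by linarith [ht.1]) (by linarith [ht.2, hρ i])

lemma SolN.nonneg (hy : SolN d a β c r φ y) (hC : CooperativeCoeffs d a β c)
    (hr : ∀ i, 0 < r i) (hφ : XPos φ) : ∀ i t, -r i ≤ t → 0 ≤ y t i := by
  obtain ⟨ρ, hρ, hρr⟩ := Pi.exists_forall_pos_add_lt hr
  simp only [zero_add] at hρr
  have hsteps : ∀ n : ℕ, ∀ i t, -r i ≤ t → t ≤ n * ρ → 0 ≤ y t i := by
    intro n
    induction n with
    | zero =>
      intro i t hit ht
      rw [Nat.cast_zero, zero_mul] at ht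
      exact (hφ i ⟨t, hit, ht⟩).trans_eq (hy.2.1 i ⟨t, hit, ht⟩).symm
    | succ n ih =>
      rw [Nat.cast_succ, add_one_mul]
      exact hy.nonneg_step hC hr (fun i => (hρr i).le) (by positivity) ih
  intro i t hit
  obtain ⟨n, hn⟩ := exists_nat_ge (t / ρ)
  exact hsteps n i t hit ((div_le_iff₀ hρ).1 hn)

lemma SolN.neg_supR_mul_le_rhs (hy : SolN d a β c r φ y) (hC : CooperativeCoeffs d a β c)
    (hr : ∀ i, 0 < r i) (hφ : XPos φ) (ht : 0 ≤ t) :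
    -supR (d i) * y t i ≤ rhs d a β c r i t y :=
  hC.neg_supR_mul_le_rhs (fun j => hy.nonneg hC hr hφ j t (by linarith [hr j]))
    (hy.nonneg hC hr hφ i (t - r i) (by linarith))

lemma SolN.monotoneOn_mul_exp (hy : SolN d a β c r φ y) (hC : CooperativeCoeffs d a β c)
    (hr : ∀ i, 0 < r i) (hφ : XPos φ) {k : ℝ} (hk : supR (d i) ≤ k) :
    MonotoneOn (fun t => y t i * Real.exp (k * t)) (Ici 0) := by
  refine monotoneOn_mul_exp_of_deriv_right (hy.continuousOn_Ici (hr i)) (hy.2.2 i)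
    fun t (ht : 0 ≤ t) => ?_
  have hyt : 0 ≤ y t i := hy.nonneg hC hr hφ i t (by linarith [hr i])
  calc -k * y t i ≤ -supR (d i) * y t i := by gcongr
    _ ≤ rhs d a β c r i t y := hy.neg_supR_mul_le_rhs hC hr hφ ht

lemma SolN.expLeN_zeroN_segN (hy : SolN d a β c r φ y) (hC : CooperativeCoeffs d a β c)
    (hr : ∀ i, 0 < r i) (hφ : XPos φ) {μ : Fin m → ℝ} (hμ : ∀ i, supR (d i) ≤ μ i)
    (ht : ∀ i, r i ≤ t) : expLeN μ (zeroN m r) (segN r y t) := by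
  have htime : ∀ i (s : Icc (-r i) (0 : ℝ)), 0 ≤ t + s := fun i s => by linarith [ht i, s.2.1]
  refine ⟨fun i s => hy.nonneg hC hr hφ i _ (by linarith [htime i s, hr i]), fun i s u hsu => ?_⟩
  have hmono : y (t + s) i * Real.exp (μ i * (t + s)) ≤ y (t + u) i * Real.exp (μ i * (t + u)) :=
    hy.monotoneOn_mul_exp hC hr hφ (hμ i) (htime i s) (htime i u) (by linarith)
  refine le_of_mul_le_mul_right ?_ (Real.exp_pos (μ i * t))
  simp only [segN, zeroN, sub_zero]
  simp only [mul_add, Real.exp_add] at hmono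
  linarith

lemma SolN.pos (hy : SolN d a β c r φ y) (hC : CooperativeCoeffs d a β c)
    (hr : ∀ i, 0 < r i) (hφ : XPos φ) (hφ0 : 0 < φ i (pt0N r hr i)) (ht : 0 ≤ t) :
    0 < y t i := by
  have hmono : y 0 i * Real.exp (supR (d i) * 0) ≤ y t i * Real.exp (supR (d i) * t) :=
    hy.monotoneOn_mul_exp hC hr hφ le_rfl self_mem_Ici ht ht
  have hy0 : y 0 i = φ i (pt0N r hr i) := hy.2.1 i (pt0N r hr i)
  rw [hy0, mul_zero, Real.exp_zero, mul_one] at hmono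
  exact pos_of_mul_pos_left (hφ0.trans_le hmono) (Real.exp_pos _).le

lemma SolN.continuousOn_rhs (hy : SolN d a β c r φ y) (hC : CooperativeCoeffs d a β c)
    (hr : ∀ i, 0 < r i) (i : Fin m) :
    ContinuousOn (fun t => rhs d a β c r i t y) (Ici 0) := by
  have hdelay : ContinuousOn (fun t => y (t - r i) i) (Ici 0) :=
    (hy.1 i).comp (f := fun t => t - r i) (by fun_prop) fun t (ht : 0 ≤ t) =>
      mem_Ici.2 (by linarith)
  have hd := (hC.continuous_d i).continuousOn (s := Ici 0)
  have hβ := (hC.continuous_β i).continuousOn (s := Ici 0)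
  have hc := (hC.continuous_c i).continuousOn (s := Ici 0)
  have hsum : ContinuousOn (fun t => ∑ j, a i j t * y t j) (Ici 0) :=
    continuousOn_finsetSum _ fun j _ =>
      (hC.continuous_a i j).continuousOn.mul (hy.continuousOn_Ici (hr j))
  exact ((hd.neg.mul (hy.continuousOn_Ici (hr i))).add hsum).add
    ((hβ.mul hdelay).mul (hc.mul hdelay).neg.rexp)

lemma SolN.hasDerivWithinAt_Ici (hy : SolN d a β c r φ y) (hC : CooperativeCoeffs d a β c)
    (hr : ∀ i, 0 < r i) (i : Fin m) :
    ∀ t ∈ Ici 0, HasDerivWithinAt (fun u => y u i) (rhs d a β c r i t y) (Ici 0) t :=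
  hasDerivWithinAt_Ici_of_continuousOn_deriv_right (hy.continuousOn_Ici (hr i)) (hy.2.2 i)
    (hy.continuousOn_rhs hC hr i)

lemma SolN.exists_lipschitzWith_segN (hy : SolN d a β c r φ y) (hC : CooperativeCoeffs d a β c)
    (hr : ∀ i, 0 < r i) (ht : r i ≤ t) : ∃ K, LipschitzWith K (segN r y t i) := by
  have hIcc : Icc (t - r i) t ⊆ Ici 0 := fun s hs => mem_Ici.2 (by linarith [hs.1])
  obtain ⟨M, hM⟩ := isCompact_Icc.exists_bound_of_continuousOn
    ((hy.continuousOn_rhs hC hr i).mono hIcc)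
  have hlip : LipschitzOnWith M.toNNReal (fun u => y u i) (Icc (t - r i) t) :=
    (convex_Icc _ _).lipschitzOnWith_of_nnnorm_hasDerivWithin_le
      (fun s hs => (hy.hasDerivWithinAt_Ici hC hr i s (hIcc hs)).mono hIcc)
      fun s hs => NNReal.le_toNNReal_of_coe_le (hM s hs)
  have hshift : ∀ s : Icc (-r i) (0 : ℝ), t + s ∈ Icc (t - r i) t := fun s =>
    ⟨by linarith [s.2.1], by linarith [s.2.2]⟩
  refine ⟨M.toNNReal, LipschitzWith.of_dist_le_mul fun s u => ?_⟩
  simpa only [segN, Subtype.dist_eq, dist_add_left] using hlip.dist_le_mul _ (hshift s) _ (hshift u)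

lemma extN_segN_of_mem (hr : ∀ i, 0 < r i) (t : ℝ) {s : ℝ} (hs : s ∈ Icc (-r i) 0) :
    extN hr (segN r y t) i s = y (t + s) i := by
  simp only [extN, segN, projIcc_of_mem _ hs]

lemma SolN.hasDerivAt_extN_segN (hy : SolN d a β c r φ y) (hC : CooperativeCoeffs d a β c)
    (hr : ∀ i, 0 < r i) (ht : r i ≤ t) {s : ℝ} (hs : s ∈ Ioo (-r i) 0) :
    HasDerivAt (extN hr (segN r y t) i) (rhs d a β c r i (t + s) y) s := by
  have hts : 0 < t + s := by linarith [hs.1]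
  have hderiv : HasDerivAt (fun u => y u i) (rhs d a β c r i (t + s) y) (t + s) :=
    (hy.hasDerivWithinAt_Ici hC hr i (t + s) hts.le).hasDerivAt (Ici_mem_nhds hts)
  refine (hderiv.comp_const_add t s).congr_of_eventuallyEq ?_
  filter_upwards [Ioo_mem_nhds hs.1 hs.2] with u hu
  exact extN_segN_of_mem hr t (Ioo_subset_Icc_self hu)

lemma SolN.exists_pos_le_deriv_extN_segN (hy : SolN d a β c r φ y)
    (hC : CooperativeCoeffs d a β c) (hr : ∀ i, 0 < r i) (hφ : XPos φ)
    (hφ0 : 0 < φ i (pt0N r hr i)) {μ : ℝ} (hμ : supR (d i) < μ) (ht : r i ≤ t) :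
    ∃ ε > 0, ∀ s ∈ Ioo (-r i) 0,
      ε ≤ deriv (extN hr (segN r y t) i) s + μ * extN hr (segN r y t) i s := by
  have hIcc : Icc (t - r i) t ⊆ Ici 0 := fun s hs => mem_Ici.2 (by linarith [hs.1])
  obtain ⟨p, hp, hmin⟩ := isCompact_Icc.exists_isMinOn
    (nonempty_Icc.2 (sub_le_self t (hr i).le)) ((hy.continuousOn_Ici (hr i)).mono hIcc)
  have hyp : 0 < y p i := hy.pos hC hr hφ hφ0 (hIcc hp)
  refine ⟨(μ - supR (d i)) * y p i, mul_pos (sub_pos.2 hμ) hyp, fun s hs => ?_⟩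
  rw [(hy.hasDerivAt_extN_segN hC hr ht hs).deriv, extN_segN_of_mem hr t (Ioo_subset_Icc_self hs)]
  have hle : y p i ≤ y (t + s) i := hmin ⟨by linarith [hs.1], by linarith [hs.2]⟩
  calc (μ - supR (d i)) * y p i ≤ (μ - supR (d i)) * y (t + s) i :=
        mul_le_mul_of_nonneg_left hle (sub_pos.2 hμ).le
    _ = -supR (d i) * y (t + s) i + μ * y (t + s) i := by ring
    _ ≤ rhs d a β c r i (t + s) y + μ * y (t + s) i := by
        gcongr
        exact hy.neg_supR_mul_le_rhs hC hr hφ (by linarith [hs.1])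

lemma SolN.strPosN_segN (hy : SolN d a β c r φ y) (hC : CooperativeCoeffs d a β c)
    (hr : ∀ i, 0 < r i) (hφ : XPos φ) (hφ0 : ∀ i, 0 < φ i (pt0N r hr i)) {μ : Fin m → ℝ}
    (hμ : ∀ i, supR (d i) < μ i) (ht : ∀ i, r i ≤ t) : strPosN hr μ (segN r y t) := by
  refine ⟨fun i => hy.exists_lipschitzWith_segN hC hr (ht i),
    fun i => hy.pos hC hr hφ (hφ0 i) (by simpa [ptnegN] using ht i), fun i => ?_⟩
  obtain ⟨ε, hε, hle⟩ := hy.exists_pos_le_deriv_extN_segN hC hr hφ (hφ0 i) (hμ i) (ht i)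
  refine ⟨ε, hε, ?_⟩
  filter_upwards [ae_restrict_mem measurableSet_Ioo] with s hs
  exact ⟨(hy.hasDerivAt_extN_segN hC hr (ht i) hs).differentiableAt, hle s hs⟩

end Solutions

end System

theorem statement16_general {m : ℕ} {d : Fin m → ℝ → ℝ} {a : Fin m → Fin m → ℝ → ℝ}
    {β c : Fin m → ℝ → ℝ} {r : Fin m → ℝ} (hr : ∀ i, 0 < r i) (hC : CooperativeCoeffs d a β c)
    (hcond : ∀ i, r i * supR (β i) * Real.exp (supR (d i) * r i) < Real.exp 1) :
    (∀ (t : ℝ) (φ ψ : XN m r), expLeN (muN r β) φ ψ →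
      ∀ i, φ i (pt0N r hr i) < ψ i (pt0N r hr i) →
        -(muN r β i) * (ψ i (pt0N r hr i) - φ i (pt0N r hr i)) <
          fN d a β c r hr i t ψ - fN d a β c r hr i t φ) ∧
    (∀ φ : XN m r, XPos φ → ∀ y : ℝ → Fin m → ℝ, SolN d a β c r φ y →
      ∀ t : ℝ, (∀ i, r i ≤ t) → expLeN (muN r β) (zeroN m r) (segN r y t)) ∧
    ∀ φ : XN m r, XPos φ → (∀ i, 0 < φ i (pt0N r hr i)) →
      ∀ y : ℝ → Fin m → ℝ, SolN d a β c r φ y →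
        ∀ t : ℝ, (∀ i, r i ≤ t) → strPosN hr (muN r β) (segN r y t) := by
  have hμ : ∀ i, supR (d i) < muN r β i := fun i =>
    supR_lt_muN (hr i) (hC.supR_β_pos i) (hcond i)
  refine ⟨?quasimonotone, ?cone, ?interior⟩
  case quasimonotone =>
    exact fun t φ ψ hle i hlt => hC.neg_muN_mul_sub_lt_fN_sub hr (hcond i) hle hlt t
  case cone =>
    exact fun φ hφ y hy t ht => hy.expLeN_zeroN_segN hC hr hφ (fun i => (hμ i).le) ht
  case interior =>
    exact fun φ hφ hφ0 y hy t ht => hy.strPosN_segN hC hr hφ hφ0 hμ ht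

/-- under the strict condition `rᵢ βᵢ⁺ e^{dᵢ⁺ rᵢ} < e`, the strengthened
quasimonotone condition holds; moreover `y_t(φ) ≥_B 0` for `t ≥ r` when `φ ∈ X₊`, and
`y_t(φ) ≫_B 0` for `t ≥ 2r` when in addition `φ(0) ≫ 0`. -/
theorem statement16
    {m : ℕ} (hm : 1 ≤ m)
    (d : Fin m → ℝ → ℝ) (a : Fin m → Fin m → ℝ → ℝ) (β c : Fin m → ℝ → ℝ)
    (r : Fin m → ℝ) (hr : ∀ i, 0 < r i)
    (hN : NicholsonHyps m d a β c)
    (hcond : ∀ i, r i * supR (β i) * Real.exp (supR (d i) * r i) < Real.exp 1) :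
    -- (1) strengthened quasimonotonicity (condition (F3))
    (∀ (t : ℝ) (φ ψ : XN m r), expLeN (muN r β) φ ψ → (∀ i s, φ i s < ψ i s) →
      ∀ i, -(muN r β i) * (ψ i (pt0N r hr i) - φ i (pt0N r hr i)) <
        fN d a β c r hr i t ψ - fN d a β c r hr i t φ) ∧
    -- (2) entering the cone K_B after time r = max rᵢ
    (∀ φ : XN m r, XPos φ → ∀ y : ℝ → Fin m → ℝ, SolN d a β c r φ y →
      ∀ t : ℝ, (∀ i, r i ≤ t) → expLeN (muN r β) (zeroN m r) (segN r y t)) ∧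
    -- (3) entering the interior of the cone after time 2r
    ∀ φ : XN m r, XPos φ → (∀ i, 0 < φ i (pt0N r hr i)) →
      ∀ y : ℝ → Fin m → ℝ, SolN d a β c r φ y →
        ∀ t : ℝ, (∀ i, 2 * r i ≤ t) → strPosN hr (muN r β) (segN r y t) := by
  obtain ⟨hquasi, hcone, hinterior⟩ := statement16_general hr hN.cooperativeCoeffs hcond
  exact ⟨fun t φ ψ hle hlt i => hquasi t φ ψ hle i (hlt i _), hcone,
    fun φ hφ hφ0 y hy t ht => hinterior φ hφ hφ0 y hy t fun i => by linarith [ht i, hr i]⟩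

end Nicholson
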